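/- Let ν ∈ M_O. The following statements are equivalent: (i) there exist a nonzero μ ∈ M_O and a regularly varying increasing sequence (c_n) of positive numbers such that c_n ν(n·) → μ in M_O as n → ∞; (ii) there exist a nonzero μ ∈ M_O and a regularly varying function c : (0,∞) → (0,∞) such that c(t) ν(t·) → μ in M_O as t → ∞; (iii) there exist a nonzero μ ∈ M_O and a Borel set E ⊆ O bounded away from C with 0 < ν(tE) < ∞ for all large t such that ν(tE)^{-1} ν(t·) → μ in M_O as t → ∞; (iv) there exist a nonzero μ ∈ M_O and an increasing sequence (b_n) of positive numbers such that n ν(b_n ·) → μ in M_O as n → ∞; (v) there exist a nonzero μ ∈ M_O and an increasing function b : (0,∞) → (0,∞) such that t ν(b(t)·) → μ in M_O as t → ∞. -/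

import Mathlib

open MeasureTheory Metric Filter Topology Set ENNReal

noncomputable section

variable {S : Type*} [MetricSpace S] [MeasurableSpace S]

/-- `A` is bounded away from `C`: `A ⊆ S \ C^r` for some `r > 0`. -/
def BddAway (C A : Set S) : Prop := ∃ r > 0, ∀ x ∈ A, r ≤ infDist x C

/-- The class `C_O` of test functions: bounded, nonnegative, continuous on `O = S \ C`,
and vanishing on `C^r` for some `r > 0` (extended by `0` to all of `S`). -/
def IsCO (C : Set S) (f : S → ℝ) : Prop :=
  ContinuousOn f Cᶜ ∧ (∀ x, 0 ≤ f x) ∧ (∃ B : ℝ, ∀ x, f x ≤ B) ∧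
    ∃ r > 0, ∀ x, infDist x C < r → f x = 0

/-- The class `M_O`: Borel measures on `O = S \ C` (i.e. giving no mass to `C`)
that are finite on `S \ C^r` for each `r > 0`. -/
def MemMO (C : Set S) (μ : Measure S) : Prop :=
  μ C = 0 ∧ ∀ r : ℝ, 0 < r → μ {x | r ≤ infDist x C} < ⊤

/-- Convergence `μ_n → μ` in `M_O`. -/
def MOTendsto (C : Set S) (μn : ℕ → Measure S) (μ : Measure S) : Prop :=
  ∀ f : S → ℝ, IsCO C f →
    Tendsto (fun n => ∫ x, f x ∂ μn n) atTop (𝓝 (∫ x, f x ∂ μ))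

/-- Axioms (A1)–(A3) for a scalar multiplication `(0,∞) × S → S`, together with the
requirement that `C` be a cone. -/
def ScaleAxioms (C : Set S) (sm : ℝ → S → S) : Prop :=
  ContinuousOn (fun p : ℝ × S => sm p.1 p.2) (Set.Ioi (0:ℝ) ×ˢ Set.univ) ∧
  (∀ x, sm 1 x = x) ∧
  (∀ l₁ l₂ : ℝ, 0 < l₁ → 0 < l₂ → ∀ x, sm l₁ (sm l₂ x) = sm (l₁ * l₂) x) ∧
  (∀ l : ℝ, 1 < l → ∀ x ∈ Cᶜ, infDist x C < infDist (sm l x) C) ∧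
  (∀ x ∈ C, ∀ l : ℝ, 0 < l → sm l x ∈ C)

/-- A positive measurable function on `(0,∞)` is regularly varying:
`c(λt)/c(t) → λ^ρ` as `t → ∞`, for all `λ > 0` and some `ρ ∈ ℝ`. -/
def RegVarFun (c : ℝ → ℝ) : Prop :=
  (∀ t : ℝ, 0 < t → 0 < c t) ∧ Measurable c ∧
    ∃ ρ : ℝ, ∀ l : ℝ, 0 < l →
      Tendsto (fun t : ℝ => c (l * t) / c t) atTop (𝓝 (l ^ ρ))

/-- A sequence of positive numbers is regularly varying:
`c_{⌊λn⌋}/c_n → λ^ρ` as `n → ∞`, for all `λ > 0` and some `ρ ∈ ℝ`. -/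
def RegVarSeq (c : ℕ → ℝ) : Prop :=
  (∀ n, 0 < c n) ∧
    ∃ ρ : ℝ, ∀ l : ℝ, 0 < l →
      Tendsto (fun n : ℕ => c ⌊l * (n : ℝ)⌋₊ / c n) atTop (𝓝 (l ^ ρ))

set_option linter.unusedSectionVars false

section Scaling

variable {C : Set S} {sm : ℝ → S → S} {μ ν : Measure S} {f : S → ℝ} {r t u l : ℝ} {x : S}

/-- The integral of `f` against `ν(t·)`. -/
def scaledIntegral (sm : ℝ → S → S) (ν : Measure S) (f : S → ℝ) (t : ℝ) : ℝ :=
  ∫ x, f (sm t⁻¹ x) ∂ν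

/-- The functionals `a i • ν(s i ·)` converge to `μ` in `M_O` along the filter `L`. -/
def ScaledTendsto {ι : Type*} (C : Set S) (sm : ℝ → S → S) (ν μ : Measure S) (L : Filter ι)
    (a s : ι → ℝ) : Prop :=
  ∀ f : S → ℝ, IsCO C f →
    Tendsto (fun i => a i * scaledIntegral sm ν f (s i)) L (𝓝 (∫ x, f x ∂μ))

/-- A radial test function, vanishing where `infDist x C ≤ r` and strictly increasing in
`infDist x C` beyond `r`. -/
def radial (C : Set S) (r : ℝ) (x : S) : ℝ :=
  max (infDist x C - r) 0 / (1 + max (infDist x C - r) 0)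

lemma IsCO.continuous (hC : IsClosed C) (hf : IsCO C f) : Continuous f := by
  obtain ⟨hcont, -, -, r, hr, hzero⟩ := hf
  rw [continuous_iff_continuousAt]
  intro x
  by_cases hx : x ∈ C
  · have hopen : IsOpen {y | infDist y C < r} := isOpen_lt (continuous_infDist_pt C) continuous_const
    have hxr : x ∈ {y | infDist y C < r} := by simpa [infDist_zero_of_mem hx] using hr
    have : f =ᶠ[𝓝 x] fun _ => 0 := by
      filter_upwards [hopen.mem_nhds hxr] with y hy using hzero y hy
    exact continuousAt_const.congr this.symm
  · exact hcont.continuousAt (hC.isOpen_compl.mem_nhds hx)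

lemma ScaleAxioms.continuous_smul (hsm : ScaleAxioms C sm) (ht : 0 < t) : Continuous (sm t) := by
  have h : Continuous fun x : S => (t, x) := by fun_prop
  exact hsm.1.comp_continuous h fun x => ⟨ht, mem_univ _⟩

lemma ScaleAxioms.inv_smul_smul (hsm : ScaleAxioms C sm) (ht : 0 < t) (x : S) :
    sm t⁻¹ (sm t x) = x := by
  rw [hsm.2.2.1 _ _ (inv_pos.2 ht) ht, inv_mul_cancel₀ ht.ne', hsm.2.1]

lemma ScaleAxioms.smul_inv_smul (hsm : ScaleAxioms C sm) (ht : 0 < t) (x : S) :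
    sm t (sm t⁻¹ x) = x := by
  rw [hsm.2.2.1 _ _ ht (inv_pos.2 ht), mul_inv_cancel₀ ht.ne', hsm.2.1]

lemma ScaleAxioms.smul_notMem (hsm : ScaleAxioms C sm) (ht : 0 < t) (hx : x ∉ C) :
    sm t x ∉ C := fun h =>
  hx (hsm.inv_smul_smul ht x ▸ hsm.2.2.2.2 _ h _ (inv_pos.2 ht))

lemma ScaleAxioms.infDist_smul_lt (hsm : ScaleAxioms C sm) (hu : 0 < u) (hu' : u < 1)
    (hx : x ∉ C) : infDist (sm u x) C < infDist x C := by
  have h := hsm.2.2.2.1 u⁻¹ ((one_lt_inv₀ hu).2 hu') (sm u x) (hsm.smul_notMem hu hx)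
  rwa [hsm.inv_smul_smul hu] at h

lemma ScaleAxioms.infDist_smul_le (hsm : ScaleAxioms C sm) (hu : 0 < u) (hu' : u ≤ 1) (x : S) :
    infDist (sm u x) C ≤ infDist x C := by
  by_cases hx : x ∈ C
  · rw [infDist_zero_of_mem (hsm.2.2.2.2 x hx u hu)]
    exact infDist_nonneg
  · rcases hu'.eq_or_lt with rfl | h
    · rw [hsm.2.1]
    · exact (hsm.infDist_smul_lt hu h hx).le

lemma ScaleAxioms.infDist_pos (hC : IsClosed C) (hsm : ScaleAxioms C sm) (hx : x ∉ C) :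
    0 < infDist x C := by
  rcases C.eq_empty_or_nonempty with rfl | hne
  · simpa using hsm.2.2.2.1 2 one_lt_two x hx
  · exact (hC.notMem_iff_infDist_pos hne).1 hx

lemma IsCO.scale (hC : IsClosed C) (hsm : ScaleAxioms C sm) (hf : IsCO C f) (ht : 1 ≤ t) :
    IsCO C fun x => f (sm t⁻¹ x) := by
  have ht0 : 0 < t⁻¹ := inv_pos.2 (by linarith)
  have hcont := (hf.continuous hC).comp (hsm.continuous_smul ht0)
  obtain ⟨-, hnn, ⟨B, hB⟩, r, hr, hzero⟩ := hf
  exact ⟨hcont.continuousOn, fun x => hnn _, ⟨B, fun x => hB _⟩, r, hr, fun x hx =>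
    hzero _ ((hsm.infDist_smul_le ht0 (inv_le_one_of_one_le₀ ht) x).trans_lt hx)⟩

lemma IsCO.integrable [BorelSpace S] (hC : IsClosed C) (hf : IsCO C f) (hμ : MemMO C μ) :
    Integrable f μ := by
  have hm := (hf.continuous hC).measurable
  obtain ⟨-, hnn, ⟨B, hB⟩, r, hr, hzero⟩ := hf
  have hsupp : Function.support f ⊆ {x | r ≤ infDist x C} := fun x hx => by
    by_contra h
    exact hx (hzero x (not_le.1 h))
  rw [← integrableOn_iff_integrable_of_support_subset hsupp]
  refine Measure.integrableOn_of_bounded (M := B) (hμ.2 r hr).ne hm.aestronglyMeasurable ?_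
  exact ae_of_all _ fun x => by rw [Real.norm_of_nonneg (hnn x)]; exact hB x

lemma radial_nonneg (C : Set S) (r : ℝ) (x : S) : 0 ≤ radial C r x := by
  unfold radial; positivity

lemma radial_mono {x y : S} (h : infDist x C ≤ infDist y C) : radial C r x ≤ radial C r y := by
  unfold radial
  have h1 : max (infDist x C - r) 0 ≤ max (infDist y C - r) 0 := by gcongr
  have h0 : 0 ≤ max (infDist x C - r) 0 := le_max_right _ _
  rw [div_le_div_iff₀ (by linarith) (by linarith)]
  nlinarith

lemma radial_pos_iff : 0 < radial C r x ↔ r < infDist x C := by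
  unfold radial
  have h0 : 0 ≤ max (infDist x C - r) 0 := le_max_right _ _
  rw [div_pos_iff_of_pos_right (by linarith)]
  simp

lemma radial_lt {x y : S} (h : infDist x C < infDist y C) (hy : 0 < radial C r y) :
    radial C r x < radial C r y := by
  rw [radial_pos_iff] at hy
  unfold radial
  have h1 : max (infDist x C - r) 0 < max (infDist y C - r) 0 := by
    rw [max_eq_left (a := infDist y C - r) (by linarith)]
    exact max_lt (by linarith) (by linarith)
  have h0 : 0 ≤ max (infDist x C - r) 0 := le_max_right _ _
  rw [div_lt_div_iff₀ (by linarith) (by linarith)]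
  nlinarith

lemma isCO_radial (hr : 0 < r) : IsCO C (radial C r) := by
  have hd := continuous_infDist_pt C
  refine ⟨?_, radial_nonneg C r, ⟨1, fun x => ?_⟩, r, hr, fun x hx => ?_⟩
  · refine Continuous.continuousOn ?_
    unfold radial
    refine Continuous.div (by fun_prop) (by fun_prop) fun x => ?_
    positivity
  · unfold radial
    have h0 : 0 ≤ max (infDist x C - r) 0 := le_max_right _ _
    rw [div_le_one (by linarith)]
    linarith
  · simp [radial, max_eq_right (show infDist x C - r ≤ 0 by linarith)]

lemma scaledIntegral_nonneg (hf : IsCO C f) (t : ℝ) : 0 ≤ scaledIntegral sm ν f t :=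
  integral_nonneg fun _ => hf.2.1 _

lemma scaledIntegral_scale (hsm : ScaleAxioms C sm) (hl : 0 < l) (ht : 0 < t) :
    scaledIntegral sm ν (fun x => f (sm l⁻¹ x)) t = scaledIntegral sm ν f (l * t) := by
  unfold scaledIntegral
  simp only [hsm.2.2.1 _ _ (inv_pos.2 hl) (inv_pos.2 ht), mul_inv]

lemma radial_scale_anti (hsm : ScaleAxioms C sm) {s t : ℝ} (hs : 0 < s) (hst : s ≤ t) (x : S) :
    radial C r (sm t⁻¹ x) ≤ radial C r (sm s⁻¹ x) := by
  have ht : 0 < t := hs.trans_le hst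
  have h : sm t⁻¹ x = sm (s / t) (sm s⁻¹ x) := by
    rw [hsm.2.2.1 _ _ (by positivity) (by positivity)]
    congr 1
    field_simp
  rw [h]
  exact radial_mono (hsm.infDist_smul_le (by positivity) ((div_le_one ht).2 hst) _)

/-- The integral of a radial test function strictly decreases under scaling. -/
lemma integral_radial_scale_lt [BorelSpace S] (hC : IsClosed C) (hsm : ScaleAxioms C sm)
    (hμ : MemMO C μ) (hr : 0 < r) (hpos : 0 < ∫ x, radial C r x ∂μ) (hl : 1 < l) :
    ∫ x, radial C r (sm l⁻¹ x) ∂μ < ∫ x, radial C r x ∂μ := by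
  have hl0 : 0 < l⁻¹ := by positivity
  have hl1 : l⁻¹ < 1 := inv_lt_one_of_one_lt₀ hl
  have hle : ∀ x, radial C r (sm l⁻¹ x) ≤ radial C r x := fun x =>
    radial_mono (hsm.infDist_smul_le hl0 hl1.le x)
  have hi := (isCO_radial (C := C) hr).integrable hC hμ
  have hi' := ((isCO_radial (C := C) hr).scale hC hsm hl.le).integrable hC hμ
  refine (integral_mono hi' hi hle).lt_of_ne fun heq => hpos.ne' ?_
  have hz : ∫ x, (radial C r x - radial C r (sm l⁻¹ x)) ∂μ = 0 := by
    rw [integral_sub hi hi', heq, sub_self]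
  rw [integral_eq_zero_iff_of_nonneg (fun x => sub_nonneg.2 (hle x)) (hi.sub hi')] at hz
  refine integral_eq_zero_of_ae ?_
  filter_upwards [hz] with x hx
  simp only [Pi.zero_apply] at hx ⊢
  by_contra hne
  have hxpos : 0 < radial C r x := (radial_nonneg C r x).lt_of_ne' hne
  have hxC : x ∉ C := fun h => by
    have h2 := radial_pos_iff.1 hxpos
    rw [infDist_zero_of_mem h] at h2
    linarith
  linarith [radial_lt (hsm.infDist_smul_lt hl0 hl1 hxC) hxpos]

lemma exists_integral_radial_scale_pos [BorelSpace S] (hC : IsClosed C) (hsm : ScaleAxioms C sm)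
    (hμ : MemMO C μ) (hμ0 : μ ≠ 0) (hl : 1 ≤ l) :
    ∃ r > 0, 0 < ∫ x, radial C r (sm l⁻¹ x) ∂μ := by
  by_contra! hcon
  have hl0 : 0 < l := by linarith
  have hzero : ∀ n : ℕ, ∀ᵐ x ∂μ, radial C (1 / ((n : ℝ) + 1)) (sm l⁻¹ x) = 0 := fun n => by
    have hn : 0 < 1 / ((n : ℝ) + 1) := by positivity
    have hco := (isCO_radial (C := C) hn).scale hC hsm hl
    have h0 := (hcon _ hn).antisymm (integral_nonneg fun x => hco.2.1 x)
    exact (integral_eq_zero_iff_of_nonneg (fun x => hco.2.1 x) (hco.integrable hC hμ)).1 h0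
  have hCae : ∀ᵐ x ∂μ, x ∉ C := measure_eq_zero_iff_ae_notMem.1 hμ.1
  refine hμ0 (ae_eq_bot.1 (Filter.eventually_false_iff_eq_bot.1 ?_))
  filter_upwards [ae_all_iff.2 hzero, hCae] with x hx hxC
  obtain ⟨n, hn⟩ := exists_nat_one_div_lt
    (hsm.infDist_pos hC (hsm.smul_notMem (inv_pos.2 hl0) hxC))
  exact (radial_pos_iff.2 hn).ne' (hx n)

lemma exists_integral_radial_pos [BorelSpace S] (hC : IsClosed C) (hsm : ScaleAxioms C sm)
    (hμ : MemMO C μ) (hμ0 : μ ≠ 0) : ∃ r > 0, 0 < ∫ x, radial C r x ∂μ := by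
  simpa [hsm.2.1] using exists_integral_radial_scale_pos hC hsm hμ hμ0 le_rfl

/-- The oscillation of `f` along the orbit segment `{exp (-v) x : 0 ≤ v ≤ δ}`. -/
def orbitOsc (sm : ℝ → S → S) (f : S → ℝ) (δ : ℝ) (x : S) : ℝ :=
  sSup ((fun v => |f (sm (Real.exp (-v)) x) - f x|) '' Icc 0 δ)

lemma continuous_orbit_diff (hC : IsClosed C) (hsm : ScaleAxioms C sm) (hf : IsCO C f) :
    Continuous fun p : S × ℝ => |f (sm (Real.exp (-p.2)) p.1) - f p.1| := by
  have hfc := hf.continuous hC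
  have h : Continuous fun p : S × ℝ => sm (Real.exp (-p.2)) p.1 :=
    hsm.1.comp_continuous (f := fun p : S × ℝ => (Real.exp (-p.2), p.1)) (by fun_prop)
      fun p => ⟨Real.exp_pos _, mem_univ _⟩
  exact ((hfc.comp h).sub (hfc.comp continuous_fst)).abs

lemma le_orbitOsc (hC : IsClosed C) (hsm : ScaleAxioms C sm) (hf : IsCO C f) {δ v : ℝ}
    (hv : v ∈ Icc 0 δ) (x : S) : |f (sm (Real.exp (-v)) x) - f x| ≤ orbitOsc sm f δ x := by
  have hc : Continuous fun v => |f (sm (Real.exp (-v)) x) - f x| :=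
    (continuous_orbit_diff hC hsm hf).comp (f := fun v : ℝ => (x, v)) (by fun_prop)
  exact le_csSup (isCompact_Icc.image hc).bddAbove ⟨v, hv, rfl⟩

lemma orbitOsc_le {δ b : ℝ} (hδ : 0 ≤ δ)
    (h : ∀ v ∈ Icc 0 δ, |f (sm (Real.exp (-v)) x) - f x| ≤ b) : orbitOsc sm f δ x ≤ b := by
  refine csSup_le ((nonempty_Icc.2 hδ).image _) ?_
  rintro _ ⟨v, hv, rfl⟩
  exact h v hv

lemma orbitOsc_nonneg (sm : ℝ → S → S) (f : S → ℝ) (δ : ℝ) (x : S) : 0 ≤ orbitOsc sm f δ x := by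
  refine Real.sSup_nonneg ?_
  rintro _ ⟨v, -, rfl⟩
  exact abs_nonneg _

lemma isCO_orbitOsc (hC : IsClosed C) (hsm : ScaleAxioms C sm) (hf : IsCO C f) {δ : ℝ}
    (hδ : 0 ≤ δ) : IsCO C (orbitOsc sm f δ) := by
  have hcont : Continuous (orbitOsc sm f δ) :=
    (isCompact_Icc (a := (0 : ℝ)) (b := δ)).continuous_sSup
      (f := fun x v => |f (sm (Real.exp (-v)) x) - f x|) (continuous_orbit_diff hC hsm hf)
  obtain ⟨-, hnn, ⟨B, hB⟩, r, hr, hzero⟩ := hf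
  refine ⟨hcont.continuousOn, orbitOsc_nonneg sm f δ, ⟨B, fun x => orbitOsc_le hδ fun v _ => ?_⟩,
    r, hr, fun x hx => (orbitOsc_le hδ fun v hv => ?_).antisymm (orbitOsc_nonneg sm f δ x)⟩
  · rw [abs_le]
    constructor <;> linarith [hB x, hnn x, hB (sm (Real.exp (-v)) x), hnn (sm (Real.exp (-v)) x)]
  · have hle := hsm.infDist_smul_le (Real.exp_pos (-v)) (by simpa using hv.1) x
    simp [hzero x hx, hzero _ (hle.trans_lt hx)]

lemma tendsto_integral_orbitOsc [BorelSpace S] (hC : IsClosed C) (hsm : ScaleAxioms C sm)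
    (hf : IsCO C f) (hμ : MemMO C μ) :
    Tendsto (fun δ => ∫ x, orbitOsc sm f δ x ∂μ) (𝓝[>] 0) (𝓝 0) := by
  have hpos : ∀ᶠ δ : ℝ in 𝓝[>] 0, 0 < δ := eventually_mem_nhdsWithin
  have hone : ∀ᶠ δ : ℝ in 𝓝[>] 0, δ < 1 :=
    eventually_nhdsWithin_of_eventually_nhds (eventually_lt_nhds one_pos)
  have key := tendsto_integral_filter_of_dominated_convergence (μ := μ) (l := 𝓝[>] (0 : ℝ))
    (F := fun δ => orbitOsc sm f δ) (f := fun _ => 0) (orbitOsc sm f 1) ?_ ?_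
    ((isCO_orbitOsc hC hsm hf zero_le_one).integrable hC hμ) ?_
  · simpa using key
  · filter_upwards [hpos] with δ hδ
    exact ((isCO_orbitOsc hC hsm hf hδ.le).integrable hC hμ).aestronglyMeasurable
  · filter_upwards [hpos, hone] with δ hδ hδ1
    refine ae_of_all _ fun x => ?_
    rw [Real.norm_of_nonneg (orbitOsc_nonneg sm f δ x)]
    exact orbitOsc_le hδ.le fun v hv => le_orbitOsc hC hsm hf ⟨hv.1, hv.2.trans hδ1.le⟩ x
  · refine ae_of_all _ fun x => ?_
    have hc : Continuous fun v => |f (sm (Real.exp (-v)) x) - f x| :=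
      (continuous_orbit_diff hC hsm hf).comp (f := fun v : ℝ => (x, v)) (by fun_prop)
    have h0 : Tendsto (fun v => |f (sm (Real.exp (-v)) x) - f x|) (𝓝 0) (𝓝 0) := by
      simpa [hsm.2.1] using hc.tendsto 0
    rw [Metric.tendsto_nhds]
    intro ε hε
    obtain ⟨η, hη, hball⟩ := Metric.eventually_nhds_iff.1 (h0.eventually_lt_const (half_pos hε))
    filter_upwards [hpos, eventually_nhdsWithin_of_eventually_nhds (eventually_lt_nhds hη)]
      with δ hδ hδη
    rw [Real.dist_0_eq_abs, abs_of_nonneg (orbitOsc_nonneg sm f δ x)]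
    refine (orbitOsc_le hδ.le fun v hv => (hball ?_).le).trans_lt (half_lt_self hε)
    rw [Real.dist_0_eq_abs, abs_of_nonneg hv.1]
    exact hv.2.trans_lt hδη

/-- Convergence in `M_O` is stable under asymptotically trivial rescaling. -/
lemma ScaledTendsto.rescale [BorelSpace S] {ι : Type*} {L : Filter ι} {a s q : ι → ℝ}
    (hC : IsClosed C) (hsm : ScaleAxioms C sm) (hν : MemMO C ν) (hμ : MemMO C μ)
    (h : ScaledTendsto C sm ν μ L a s) (ha : ∀ᶠ i in L, 0 ≤ a i) (hs : ∀ᶠ i in L, 1 ≤ s i)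
    (hq : ∀ᶠ i in L, 1 ≤ q i) (hq1 : Tendsto q L (𝓝 1)) :
    ScaledTendsto C sm ν μ L a fun i => q i * s i := by
  intro f hf
  refine (h f hf).congr_dist ?_
  rw [Metric.tendsto_nhds]
  intro ε hε
  obtain ⟨δ, hδ, hδε⟩ := (eventually_mem_nhdsWithin.and
    ((tendsto_integral_orbitOsc hC hsm hf hμ).eventually_lt_const hε)).exists
  have hδ0 : (0 : ℝ) < δ := hδ
  have hosc := isCO_orbitOsc hC hsm hf hδ0.le
  filter_upwards [ha, hs, hq, (h _ hosc).eventually_lt_const hδε,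
    hq1.eventually_lt_const (Real.one_lt_exp_iff.2 hδ0)] with i hai hsi hqi hlt hqδ
  have hq0 : 0 < q i := by linarith
  have hi := (hf.scale hC hsm hsi).integrable hC hν
  have hi' := (hf.scale hC hsm (one_le_mul_of_one_le_of_one_le hqi hsi)).integrable hC hν
  rw [Real.dist_0_eq_abs, abs_of_nonneg dist_nonneg, dist_comm, Real.dist_eq, ← mul_sub, abs_mul,
    abs_of_nonneg hai]
  refine lt_of_le_of_lt (mul_le_mul_of_nonneg_left ?_ hai) hlt
  unfold scaledIntegral
  rw [← integral_sub hi' hi]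
  refine (abs_integral_le_integral_abs).trans (integral_mono (hi'.sub hi).abs
    ((hosc.scale hC hsm hsi).integrable hC hν) fun x => ?_)
  have hlog : Real.log (q i) ∈ Icc 0 δ :=
    ⟨Real.log_nonneg hqi, ((Real.log_lt_iff_lt_exp hq0).2 hqδ).le⟩
  have hx := le_orbitOsc hC hsm hf hlog (sm (s i)⁻¹ x)
  rwa [Real.exp_neg, Real.exp_log hq0, hsm.2.2.1 _ _ (inv_pos.2 hq0) (inv_pos.2 (by linarith)),
    ← mul_inv] at hx

end Scaling

/-- A positive monotone function whose dilation quotients converge to positive limits for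
dilations `l ≥ 1` has limits `l ^ ρ`, for all `l > 0`. -/
lemma exists_tendsto_div_rpow {c : ℝ → ℝ} (hc : Monotone c) (hpos : ∀ t, 0 < c t)
    (h : ∀ l : ℝ, 1 ≤ l → ∃ L > 0, Tendsto (fun t => c (l * t) / c t) atTop (𝓝 L)) :
    ∃ ρ : ℝ, ∀ l : ℝ, 0 < l → Tendsto (fun t => c (l * t) / c t) atTop (𝓝 (l ^ ρ)) := by
  have hall : ∀ l : ℝ, 0 < l → ∃ L > 0, Tendsto (fun t => c (l * t) / c t) atTop (𝓝 L) := by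
    intro l hl
    rcases le_total 1 l with h1 | h1
    · exact h l h1
    · obtain ⟨L, hL, ht⟩ := h l⁻¹ ((one_le_inv₀ hl).2 h1)
      refine ⟨L⁻¹, inv_pos.2 hL, ?_⟩
      refine ((ht.comp (tendsto_id.const_mul_atTop hl)).inv₀ hL.ne').congr fun t => ?_
      simp [inv_mul_cancel_left₀ hl.ne']
  have hlog : ∀ u : ℝ, ∃ g : ℝ,
      Tendsto (fun t => Real.log (c (Real.exp u * t)) - Real.log (c t)) atTop (𝓝 g) := by
    intro u
    obtain ⟨L, hL, ht⟩ := hall _ (Real.exp_pos u)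
    refine ⟨Real.log L, (ht.log hL.ne').congr fun t => ?_⟩
    rw [Real.log_div (hpos _).ne' (hpos _).ne']
  choose g hg using hlog
  have hadd : ∀ u v, g (u + v) = g u + g v := by
    intro u v
    refine tendsto_nhds_unique (hg (u + v)) ?_
    refine (((hg u).comp (tendsto_id.const_mul_atTop (Real.exp_pos v))).add (hg v)).congr fun t => ?_
    simp [Real.exp_add, mul_assoc]
  have hmono : Monotone g := by
    intro u v huv
    refine le_of_tendsto_of_tendsto (hg u) (hg v) ?_
    filter_upwards [eventually_ge_atTop 0] with t ht
    have : c (Real.exp u * t) ≤ c (Real.exp v * t) := hc (by gcongr)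
    have := Real.log_le_log (hpos _) this
    linarith
  have hcont : Continuous (AddMonoidHom.mk' g hadd) :=
    MeasureTheory.Measure.AddMonoidHom.continuous_of_measurable _ hmono.measurable
  have hlin : ∀ u, g u = u * g 1 := by
    intro u
    have := map_real_smul (AddMonoidHom.mk' g hadd) hcont u 1
    simpa using this
  refine ⟨g 1, fun l hl => ?_⟩
  have := (hg (Real.log l)).rexp
  rw [hlin, ← Real.rpow_def_of_pos hl, Real.exp_log hl] at this
  refine this.congr fun t => ?_
  rw [Real.exp_sub, Real.exp_log (hpos _), Real.exp_log (hpos _)]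

section Normalization

variable {C : Set S} {sm : ℝ → S → S} {μ ν : Measure S} {r : ℝ}

lemma MemMO.ofReal_smul (hμ : MemMO C μ) (k : ℝ) : MemMO C (ENNReal.ofReal k • μ) := by
  refine ⟨by simp [hμ.1], fun s hs => ?_⟩
  rw [Measure.smul_apply, smul_eq_mul]
  exact ENNReal.mul_lt_top ENNReal.ofReal_lt_top (hμ.2 s hs)

lemma ofReal_smul_ne_zero {k : ℝ} (hμ0 : μ ≠ 0) (hk : 0 < k) : ENNReal.ofReal k • μ ≠ 0 := by
  rw [ne_eq, ← Measure.measure_univ_eq_zero, Measure.smul_apply, smul_eq_mul, mul_eq_zero, not_or,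
    Measure.measure_univ_eq_zero]
  exact ⟨(ENNReal.ofReal_pos.2 hk).ne', hμ0⟩

lemma scaledIntegral_radial_anti [BorelSpace S] (hC : IsClosed C) (hsm : ScaleAxioms C sm)
    (hν : MemMO C ν) (hr : 0 < r) {s t : ℝ} (hs : 1 ≤ s) (hst : s ≤ t) :
    scaledIntegral sm ν (radial C r) t ≤ scaledIntegral sm ν (radial C r) s :=
  integral_mono (((isCO_radial hr).scale hC hsm (hs.trans hst)).integrable hC hν)
    (((isCO_radial hr).scale hC hsm hs).integrable hC hν)
    fun x => radial_scale_anti hsm (by linarith) hst x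

lemma continuous_scaledIntegral_radial [BorelSpace S] (hC : IsClosed C) (hsm : ScaleAxioms C sm)
    (hν : MemMO C ν) (hr : 0 < r) :
    Continuous fun t => scaledIntegral sm ν (radial C r) (max t 1) := by
  have hrad := isCO_radial (C := C) hr
  have hinv : Continuous fun t : ℝ => (max t 1)⁻¹ :=
    Continuous.inv₀ (by fun_prop) fun t => by positivity
  refine continuous_of_dominated (bound := radial C r) (fun t => ?_) (fun t => ?_)
    (hrad.integrable hC hν) (ae_of_all _ fun x => ?_)
  · exact ((hrad.scale hC hsm (le_max_right t 1)).integrable hC hν).aestronglyMeasurable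
  · refine ae_of_all _ fun x => ?_
    rw [Real.norm_of_nonneg (radial_nonneg C r _)]
    exact radial_mono (hsm.infDist_smul_le (by positivity)
      (inv_le_one_of_one_le₀ (le_max_right t 1)) x)
  · exact (hrad.continuous hC).comp (hsm.1.comp_continuous
      (f := fun t : ℝ => ((max t 1)⁻¹, x)) (hinv.prodMk continuous_const)
      fun t => ⟨mem_Ioi.2 (by positivity), mem_univ _⟩)

/-- The normalizing function of a regularly varying measure can be chosen continuous, monotone
and regularly varying. -/
lemma ScaledTendsto.exists_normalization [BorelSpace S] (hC : IsClosed C)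
    (hsm : ScaleAxioms C sm) (hν : MemMO C ν) (hμ : MemMO C μ) (hμ0 : μ ≠ 0) {a : ℝ → ℝ}
    (h : ScaledTendsto C sm ν μ atTop a id) :
    ∃ μ' : Measure S, μ' ≠ 0 ∧ MemMO C μ' ∧ ∃ c : ℝ → ℝ, (∀ t, 0 < c t) ∧ Monotone c ∧
      Continuous c ∧ Tendsto c atTop atTop ∧
      (∃ ρ : ℝ, ∀ l : ℝ, 0 < l → Tendsto (fun t => c (l * t) / c t) atTop (𝓝 (l ^ ρ))) ∧
      ScaledTendsto C sm ν μ' atTop c id := by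
  obtain ⟨r, hr, hI⟩ := exists_integral_radial_pos hC hsm hμ hμ0
  set I := ∫ x, radial C r x ∂μ with hIdef
  have hrad := isCO_radial (C := C) hr
  set F := scaledIntegral sm ν (radial C r) with hFdef
  have hFanti : ∀ s t, 1 ≤ s → s ≤ t → F t ≤ F s := fun s t hs hst =>
    scaledIntegral_radial_anti hC hsm hν hr hs hst
  have hev : ∀ᶠ t in atTop, 0 < a t * F t := (h _ hrad).eventually_const_lt hI
  have hFpos : ∀ t, 1 ≤ t → 0 < F t := by
    intro t ht
    obtain ⟨t', hat, htt'⟩ := (hev.and (eventually_ge_atTop t)).exists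
    have hne : F t' ≠ 0 := fun h0 => by simp [h0] at hat
    exact ((scaledIntegral_nonneg hrad t').lt_of_ne' hne).trans_le (hFanti t t' ht htt')
  set c : ℝ → ℝ := fun t => (F (max t 1))⁻¹ with hcdef
  have hc1 : ∀ t, 1 ≤ t → c t = (F t)⁻¹ := fun t ht => by simp [hcdef, max_eq_left ht]
  have hcpos : ∀ t, 0 < c t := fun t => inv_pos.2 (hFpos _ (le_max_right _ _))
  have hcmono : Monotone c := fun s t hst =>
    inv_anti₀ (hFpos _ (le_max_right _ _)) (hFanti _ _ (le_max_right _ _) (by gcongr))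
  have hccont : Continuous c := (continuous_scaledIntegral_radial hC hsm hν hr).inv₀
    fun t => (hFpos _ (le_max_right _ _)).ne'
  set μ' := ENNReal.ofReal I⁻¹ • μ with hμ'def
  have hint : ∀ f : S → ℝ, ∫ x, f x ∂μ' = (∫ x, f x ∂μ) / I := fun f => by
    rw [integral_smul_measure, ENNReal.toReal_ofReal (by positivity), smul_eq_mul, div_eq_inv_mul]
  have hμ'0 : μ' ≠ 0 := ofReal_smul_ne_zero hμ0 (inv_pos.2 hI)
  have hμ' : MemMO C μ' := hμ.ofReal_smul _
  have hconv : ScaledTendsto C sm ν μ' atTop c id := by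
    intro f hf
    rw [hint]
    refine ((h f hf).div (h _ hrad) hI.ne').congr' ?_
    filter_upwards [hev, eventually_ge_atTop 1] with t hat ht
    have ha0 : a t ≠ 0 := fun h0 => by simp [h0] at hat
    simp only [id, Pi.div_apply]
    rw [hc1 t ht, mul_div_mul_left _ _ ha0, div_eq_inv_mul]
  have hnorm : ∫ x, radial C r x ∂μ' = 1 := by rw [hint, ← hIdef, div_self hI.ne']
  have hdil : ∀ l : ℝ, 1 ≤ l → ∀ f : S → ℝ, IsCO C f →
      Tendsto (fun t => c t * scaledIntegral sm ν f (l * t)) atTop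
        (𝓝 (∫ x, f (sm l⁻¹ x) ∂μ')) := by
    intro l hl f hf
    refine (hconv _ (hf.scale hC hsm hl)).congr' ?_
    filter_upwards [eventually_gt_atTop 0] with t ht
    rw [id, scaledIntegral_scale hsm (by linarith) ht]
  have hquot : ∀ l : ℝ, 1 ≤ l → ∀ᶠ t in atTop, c t * F (l * t) = (c (l * t) / c t)⁻¹ := by
    intro l hl
    filter_upwards [eventually_ge_atTop 1] with t ht
    rw [hc1 (l * t) (one_le_mul_of_one_le_of_one_le hl ht), inv_div, div_inv_eq_mul]
  have hψpos : ∀ l : ℝ, 1 ≤ l → 0 < ∫ x, radial C r (sm l⁻¹ x) ∂μ' := by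
    intro l hl
    have hl0 : 0 < l := by linarith
    refine (integral_nonneg fun x => radial_nonneg C r _).lt_of_ne' fun h0 => ?_
    obtain ⟨r', hr', hK⟩ := exists_integral_radial_scale_pos hC hsm hμ' hμ'0 hl
    have hrad' := isCO_radial (C := C) hr'
    have hzero := (hdil l hl _ hrad).mul
      ((hconv _ hrad').comp (tendsto_id.const_mul_atTop hl0))
    rw [h0, zero_mul] at hzero
    refine hK.ne' (tendsto_nhds_unique (hdil l hl _ hrad') (hzero.congr' ?_))
    filter_upwards [hquot l hl] with t ht
    have h1 := (hcpos t).ne'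
    have h2 := (hcpos (l * t)).ne'
    rw [← hFdef, ht]
    simp only [Function.comp, id]
    field_simp
  have hlim : ∀ l : ℝ, 1 ≤ l → Tendsto (fun t => c (l * t) / c t) atTop
      (𝓝 (∫ x, radial C r (sm l⁻¹ x) ∂μ')⁻¹) := by
    intro l hl
    refine ((hdil l hl _ hrad).inv₀ (hψpos l hl).ne').congr' ?_
    filter_upwards [hquot l hl] with t ht
    rw [← hFdef, ht, inv_inv]
  have htop : Tendsto c atTop atTop := by
    rcases tendsto_atTop_of_monotone hcmono with htop | ⟨L, hL⟩
    · exact htop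
    · exfalso
      have hLpos : 0 < L := (hcpos 0).trans_le (hcmono.ge_of_tendsto hL 0)
      have hone := (hL.comp (tendsto_id.const_mul_atTop (two_pos (α := ℝ)))).div hL hLpos.ne'
      have heq := tendsto_nhds_unique (hlim 2 one_le_two) hone
      have hlt := integral_radial_scale_lt hC hsm hμ' hr (by rw [hnorm]; exact one_pos) one_lt_two
      rw [div_self hLpos.ne', inv_eq_one] at heq
      linarith
  exact ⟨μ', hμ'0, hμ', c, hcpos, hcmono, hccont, htop, exists_tendsto_div_rpow hcmono hcpos
    fun l hl => ⟨_, inv_pos.2 (hψpos l hl), hlim l hl⟩, hconv⟩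

end Normalization

section Sequences

variable {C : Set S} {sm : ℝ → S → S} {μ ν : Measure S} {r : ℝ}

/-- Convergence along a sequence of scales with ratios tending to one extends to all scales. -/
lemma ScaledTendsto.exists_of_seq [BorelSpace S] {a b : ℕ → ℝ} (hC : IsClosed C)
    (hsm : ScaleAxioms C sm) (hν : MemMO C ν) (hμ : MemMO C μ)
    (h : ScaledTendsto C sm ν μ atTop a b) (ha : ∀ n, 0 ≤ a n) (hb : Monotone b)
    (hbtop : Tendsto b atTop atTop)
    (hratio : Tendsto (fun n => b (n + 1) / b n) atTop (𝓝 1)) :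
    ∃ a' : ℝ → ℝ, ScaledTendsto C sm ν μ atTop a' id := by
  have hex : ∀ t : ℝ, b 0 ≤ t → ∃ n, b n ≤ t ∧ t < b (n + 1) := by
    intro t ht
    have hgt : ∃ n, t < b n := (hbtop.eventually_gt_atTop t).exists
    classical
    have hne : Nat.find hgt ≠ 0 := fun h0 => by
      have := Nat.find_spec hgt
      rw [h0] at this
      linarith
    obtain ⟨n, hn⟩ := Nat.exists_eq_succ_of_ne_zero hne
    refine ⟨n, not_lt.1 (Nat.find_min hgt (m := n) (by omega)), ?_⟩
    have := Nat.find_spec hgt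
    rwa [hn] at this
  choose! N hN using hex
  have hNtop : Tendsto N atTop atTop := by
    refine tendsto_atTop.2 fun k => ?_
    filter_upwards [eventually_ge_atTop (b 0), eventually_ge_atTop (b k)] with t h0 hk
    by_contra hlt
    exact absurd ((hN t h0).2.trans_le (hb (show N t + 1 ≤ k by omega))) (not_lt.2 hk)
  have hbN := hbtop.comp hNtop
  have hq : ∀ᶠ t in atTop, 1 ≤ t / b (N t) := by
    filter_upwards [eventually_ge_atTop (b 0), hbN.eventually_gt_atTop 0] with t h0 hp
    exact (one_le_div hp).2 (hN t h0).1
  have hq1 : Tendsto (fun t => t / b (N t)) atTop (𝓝 1) := by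
    refine tendsto_of_tendsto_of_tendsto_of_le_of_le' tendsto_const_nhds (hratio.comp hNtop) hq ?_
    filter_upwards [eventually_ge_atTop (b 0), hbN.eventually_gt_atTop 0] with t h0 hp
    exact (div_le_div_iff_of_pos_right hp).2 (hN t h0).2.le
  have hcomp : ScaledTendsto C sm ν μ atTop (a ∘ N) (b ∘ N) := fun f hf => (h f hf).comp hNtop
  refine ⟨a ∘ N, fun f hf => ?_⟩
  refine (hcomp.rescale hC hsm hν hμ (Eventually.of_forall fun t => ha _)
    (hbN.eventually_ge_atTop 1) hq hq1 f hf).congr' ?_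
  filter_upwards [hbN.eventually_gt_atTop 0] with t hp
  rw [id, Function.comp, Function.comp, div_mul_cancel₀]
  exact hp.ne'

lemma radial_anti_radius {r' : ℝ} (h : r' ≤ r) (x : S) : radial C r x ≤ radial C r' x := by
  unfold radial
  have h1 : max (infDist x C - r) 0 ≤ max (infDist x C - r') 0 := by gcongr
  have h0 : 0 ≤ max (infDist x C - r) 0 := le_max_right _ _
  rw [div_le_div_iff₀ (by linarith) (by linarith)]
  nlinarith

lemma tendsto_scaledIntegral_zero {b : ℕ → ℝ} {f : S → ℝ}
    (h : ScaledTendsto C sm ν μ atTop (fun n : ℕ => (n : ℝ)) b) (hf : IsCO C f) :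
    Tendsto (fun n => scaledIntegral sm ν f (b n)) atTop (𝓝 0) := by
  have h0 := (h f hf).mul (tendsto_inv_atTop_nhds_zero_nat (𝕜 := ℝ))
  rw [mul_zero] at h0
  refine h0.congr' ?_
  filter_upwards [eventually_ge_atTop 1] with n hn
  have : (n : ℝ) ≠ 0 := by positivity
  field_simp

lemma tendsto_atTop_of_scaledTendsto [BorelSpace S] {b : ℕ → ℝ} (hC : IsClosed C)
    (hsm : ScaleAxioms C sm) (hν : MemMO C ν) (hμ : MemMO C μ) (hμ0 : μ ≠ 0)
    (h : ScaledTendsto C sm ν μ atTop (fun n : ℕ => (n : ℝ)) b) (hbpos : ∀ n, 0 < b n)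
    (hb : Monotone b) : Tendsto b atTop atTop := by
  rcases tendsto_atTop_of_monotone hb with htop | ⟨L, hL⟩
  · exact htop
  exfalso
  have hbL : ∀ n, b n ≤ L := hb.ge_of_tendsto hL
  have hLpos : 0 < L := (hbpos 0).trans_le (hbL 0)
  have hLinv : 0 < L⁻¹ := inv_pos.2 hLpos
  obtain ⟨R, hR, hIR⟩ := exists_integral_radial_pos hC hsm hμ hμ0
  have hzero : ∀ r, 0 < r → r ≤ R → ∀ᵐ x ∂ν, radial C r (sm L⁻¹ x) = 0 := by
    intro r hr hrR
    have hrad := isCO_radial (C := C) hr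
    have hI : 0 < ∫ x, radial C r x ∂μ := hIR.trans_le (integral_mono
      ((isCO_radial hR).integrable hC hμ) (hrad.integrable hC hμ) (radial_anti_radius hrR))
    have hint : ∀ᶠ n in atTop, Integrable (fun x => radial C r (sm (b n)⁻¹ x)) ν := by
      filter_upwards [(h _ hrad).eventually_const_lt hI] with n hn
      by_contra hni
      rw [scaledIntegral, integral_undef hni, mul_zero] at hn
      exact hn.false
    have hle : ∀ n x, radial C r (sm L⁻¹ x) ≤ radial C r (sm (b n)⁻¹ x) := fun n x =>
      radial_scale_anti hsm (hbpos n) (hbL n) x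
    have hmeas : AEStronglyMeasurable (fun x => radial C r (sm L⁻¹ x)) ν :=
      ((hrad.continuous hC).comp (hsm.continuous_smul hLinv)).measurable.aestronglyMeasurable
    have hintL : Integrable (fun x => radial C r (sm L⁻¹ x)) ν := by
      obtain ⟨n, hn⟩ := hint.exists
      refine hn.mono' hmeas (ae_of_all _ fun x => ?_)
      rw [Real.norm_of_nonneg (radial_nonneg C r _)]
      exact hle n x
    have hle0 : ∫ x, radial C r (sm L⁻¹ x) ∂ν ≤ 0 := by
      refine ge_of_tendsto (tendsto_scaledIntegral_zero h hrad) ?_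
      filter_upwards [hint] with n hn using integral_mono hintL hn (hle n)
    exact (integral_eq_zero_iff_of_nonneg (fun x => radial_nonneg C r _) hintL).1
      (hle0.antisymm (integral_nonneg fun x => radial_nonneg C r _))
  have hν0 : ν = 0 := by
    have hCae : ∀ᵐ x ∂ν, x ∉ C := measure_eq_zero_iff_ae_notMem.1 hν.1
    have hall : ∀ᵐ x ∂ν, ∀ n : ℕ, radial C (min R (1 / ((n : ℝ) + 1))) (sm L⁻¹ x) = 0 :=
      ae_all_iff.2 fun n => hzero _ (lt_min hR (by positivity)) (min_le_left _ _)
    refine ae_eq_bot.1 (Filter.eventually_false_iff_eq_bot.1 ?_)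
    filter_upwards [hall, hCae] with x hx hxC
    obtain ⟨n, hn⟩ := exists_nat_one_div_lt (hsm.infDist_pos hC (hsm.smul_notMem hLinv hxC))
    exact (radial_pos_iff.2 ((min_le_right _ _).trans_lt hn)).ne' (hx n)
  have := h _ (isCO_radial hR)
  simp only [scaledIntegral, hν0, integral_zero_measure, mul_zero] at this
  exact hIR.ne (tendsto_nhds_unique tendsto_const_nhds this)

lemma tendsto_ratio_of_scaledTendsto [BorelSpace S] {b : ℕ → ℝ} (hC : IsClosed C)
    (hsm : ScaleAxioms C sm) (hν : MemMO C ν) (hμ : MemMO C μ) (hμ0 : μ ≠ 0)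
    (h : ScaledTendsto C sm ν μ atTop (fun n : ℕ => (n : ℝ)) b) (hb : Monotone b)
    (hbtop : Tendsto b atTop atTop) :
    Tendsto (fun n => b (n + 1) / b n) atTop (𝓝 1) := by
  obtain ⟨r, hr, hI⟩ := exists_integral_radial_pos hC hsm hμ hμ0
  have hrad := isCO_radial (C := C) hr
  refine tendsto_order.2 ⟨fun l hl => ?_, fun l hl => ?_⟩
  · filter_upwards [hbtop.eventually_gt_atTop 0] with n hn
    exact hl.trans_le ((one_le_div hn).2 (hb n.le_succ))
  · have hlt := integral_radial_scale_lt hC hsm hμ hr hI hl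
    obtain ⟨m, hm1, hm2⟩ := exists_between hlt
    have hshift : Tendsto (fun n : ℕ => (n : ℝ) * scaledIntegral sm ν (radial C r) (b (n + 1)))
        atTop (𝓝 (∫ x, radial C r x ∂μ)) := by
      have h1 := ((h _ hrad).comp (tendsto_add_atTop_nat 1)).sub
        ((tendsto_scaledIntegral_zero h hrad).comp (tendsto_add_atTop_nat 1))
      rw [sub_zero] at h1
      refine h1.congr fun n => ?_
      simp only [Function.comp]
      push_cast
      ring
    filter_upwards [hbtop.eventually_ge_atTop 1, hshift.eventually_const_lt hm2,
      (h _ (hrad.scale hC hsm hl.le)).eventually_lt_const hm1] with n hn h1 h2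
    have hn0 : 0 < b n := by linarith
    rw [scaledIntegral_scale hsm (by linarith) hn0] at h2
    rw [div_lt_iff₀ hn0]
    by_contra hge
    have := scaledIntegral_radial_anti hC hsm hν hr (one_le_mul_of_one_le_of_one_le hl.le hn)
      (not_lt.1 hge)
    have := mul_le_mul_of_nonneg_left this (Nat.cast_nonneg (α := ℝ) n)
    linarith

end Sequences

lemma tendsto_natFloor_div_rpow {c : ℝ → ℝ} (hc : Monotone c) (hpos : ∀ t, 0 < c t) {ρ l : ℝ}
    (hl : 0 < l)
    (h : ∀ l : ℝ, 0 < l → Tendsto (fun t => c (l * t) / c t) atTop (𝓝 (l ^ ρ))) :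
    Tendsto (fun n : ℕ => c ⌊l * (n : ℝ)⌋₊ / c n) atTop (𝓝 (l ^ ρ)) := by
  refine tendsto_order.2 ⟨fun y hy => ?_, fun y hy => ?_⟩
  · have hcont : ContinuousAt (fun m : ℝ => m ^ ρ) l := Real.continuousAt_rpow_const _ _ (.inl hl.ne')
    have hnear : ∀ᶠ m in 𝓝[<] l, y < m ^ ρ ∧ 0 < m ∧ m < l :=
      ((eventually_nhdsWithin_of_eventually_nhds (hcont.eventually_const_lt hy)).and
        ((eventually_nhdsWithin_of_eventually_nhds (eventually_gt_nhds hl)).and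
          eventually_mem_nhdsWithin))
    obtain ⟨m, hym, hm, hml⟩ := hnear.exists
    have htop : Tendsto (fun n : ℕ => (l - m) * (n : ℝ)) atTop atTop :=
      tendsto_natCast_atTop_atTop.const_mul_atTop (sub_pos.2 hml)
    filter_upwards [((h m hm).comp tendsto_natCast_atTop_atTop).eventually_const_lt hym,
      htop.eventually_ge_atTop 1] with n hn h1
    refine hn.trans_le ((div_le_div_iff_of_pos_right (hpos _)).2 (hc ?_))
    have := Nat.lt_floor_add_one (l * (n : ℝ))
    linarith
  · filter_upwards [((h l hl).comp tendsto_natCast_atTop_atTop).eventually_lt_const hy] with n hn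
    refine lt_of_le_of_lt ((div_le_div_iff_of_pos_right (hpos _)).2 (hc ?_)) hn
    exact Nat.floor_le (by positivity)

/-- A continuous monotone function tending to infinity has a monotone right inverse near
infinity. -/
lemma exists_monotone_rightInverse {c : ℝ → ℝ} (hc : Monotone c) (hcont : Continuous c)
    (htop : Tendsto c atTop atTop) :
    ∃ b : ℝ → ℝ, (∀ t, 0 < b t) ∧ Monotone b ∧ Tendsto b atTop atTop ∧
      ∀ t, c 1 ≤ t → c (b t) = t := by
  have hex : ∀ y, c 1 ≤ y → ∃ s, 1 ≤ s ∧ c s = y := by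
    intro y hy
    obtain ⟨T, hT1, hT⟩ := ((eventually_ge_atTop 1).and (htop.eventually_ge_atTop y)).exists
    obtain ⟨s, hs, rfl⟩ := intermediate_value_Icc hT1 hcont.continuousOn ⟨hy, hT⟩
    exact ⟨s, hs.1, rfl⟩
  choose! s hs1 hs using hex
  refine ⟨fun t => s (max t (c 1)), fun t => one_pos.trans_le (hs1 _ (le_max_right _ _)), ?_,
    ?_, fun t ht => ?_⟩
  · intro t t' htt'
    rcases (max_le_max_right (c 1) htt').eq_or_lt with heq | hlt
    · simp only [heq, le_refl]
    · rw [← hs _ (le_max_right t (c 1)), ← hs _ (le_max_right t' (c 1))] at hlt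
      exact (hc.reflect_lt hlt).le
  · refine tendsto_atTop.2 fun T => ?_
    filter_upwards [eventually_gt_atTop (c T)] with t ht
    refine (hc.reflect_lt ?_).le
    rw [hs _ (le_max_right _ _)]
    exact ht.trans_le (le_max_left _ _)
  · simp only [max_eq_left ht, hs t ht]

section Portmanteau

variable {C : Set S} {sm : ℝ → S → S} {μ ν : Measure S} {f : S → ℝ} {t : ℝ}

lemma integral_smul_map [BorelSpace S] (hC : IsClosed C) (hsm : ScaleAxioms C sm)
    (hf : IsCO C f) (ht : 0 < t) (k : ℝ≥0∞) :
    ∫ x, f x ∂(k • Measure.map (sm t⁻¹) ν) = k.toReal * scaledIntegral sm ν f t := by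
  rw [integral_smul_measure, smul_eq_mul, scaledIntegral,
    integral_map (hsm.continuous_smul (inv_pos.2 ht)).measurable.aemeasurable
      (hf.continuous hC).measurable.aestronglyMeasurable]

lemma MemMO.map_scale [BorelSpace S] (hC : IsClosed C) (hsm : ScaleAxioms C sm)
    (hν : MemMO C ν) (ht : 1 ≤ t) : MemMO C (Measure.map (sm t⁻¹) ν) := by
  have ht0 : 0 < t⁻¹ := inv_pos.2 (by linarith)
  have hm := (hsm.continuous_smul ht0).measurable
  refine ⟨?_, fun s hs => ?_⟩
  · rw [Measure.map_apply hm hC.measurableSet]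
    exact measure_mono_null (fun x hx => by_contra fun h => hsm.smul_notMem ht0 h hx) hν.1
  · rw [Measure.map_apply hm (measurableSet_le measurable_const measurable_infDist)]
    refine (measure_mono fun x hx => ?_).trans_lt (hν.2 s hs)
    exact le_trans hx (hsm.infDist_smul_le ht0 (inv_le_one_of_one_le₀ ht) x)

lemma measure_image_scale [BorelSpace S] (hsm : ScaleAxioms C sm) (ht : 0 < t) {E : Set S}
    (hE : MeasurableSet E) : ν (sm t '' E) = Measure.map (sm t⁻¹) ν E := by
  rw [Measure.map_apply (hsm.continuous_smul (inv_pos.2 ht)).measurable hE,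
    image_eq_preimage_of_inverse (fun x => hsm.inv_smul_smul ht x)
      (fun x => hsm.smul_inv_smul ht x)]

/-- A continuous test function between the indicators of `{q ≤ infDist x C}` and
`{p ≤ infDist x C}`. -/
lemma exists_isCO_between [BorelSpace S] (hC : IsClosed C) {p q : ℝ} (hp : 0 < p) (hpq : p < q) :
    ∃ f : S → ℝ, IsCO C f ∧ ∀ μ : Measure S, MemMO C μ →
      μ.real {x | q ≤ infDist x C} ≤ ∫ x, f x ∂μ ∧ ∫ x, f x ∂μ ≤ μ.real {x | p ≤ infDist x C} := by
  have hd := continuous_infDist_pt C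
  have hm : ∀ s, MeasurableSet {x | s ≤ infDist x C} := fun s =>
    measurableSet_le measurable_const measurable_infDist
  set f : S → ℝ := fun x => max 0 (min 1 ((infDist x C - p) / (q - p))) with hfdef
  have hf : IsCO C f := by
    refine ⟨Continuous.continuousOn (by fun_prop), fun x => le_max_left _ _,
      ⟨1, fun x => max_le zero_le_one (min_le_left _ _)⟩, p, hp, fun x hx => ?_⟩
    exact max_eq_left ((min_le_right _ _).trans
      (div_nonpos_of_nonpos_of_nonneg (by linarith) (by linarith)))
  have hind : ∀ μ : Measure S, MemMO C μ → ∀ s, 0 < s →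
      Integrable ({x | s ≤ infDist x C}.indicator (1 : S → ℝ)) μ := fun μ hμ s hs =>
    (integrable_indicator_iff (hm s)).2 (integrableOn_const (hμ.2 s hs).ne)
  refine ⟨f, hf, fun μ hμ => ⟨?_, ?_⟩⟩
  · rw [← integral_indicator_one (hm q)]
    refine integral_mono (hind μ hμ q (hp.trans hpq)) (hf.integrable hC hμ) fun x => ?_
    refine indicator_le' (fun x hx => ?_) (fun x _ => hf.2.1 x) x
    have h1 : 1 ≤ (infDist x C - p) / (q - p) :=
      (one_le_div (by linarith)).2 (by linarith [show q ≤ infDist x C from hx])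
    simp [hfdef, h1]
  · rw [← integral_indicator_one (hm p)]
    refine integral_mono (hf.integrable hC hμ) (hind μ hμ p hp) fun x => ?_
    by_cases hx : p ≤ infDist x C
    · rw [indicator_of_mem (show x ∈ {x | p ≤ infDist x C} from hx)]
      exact max_le zero_le_one (min_le_left _ _)
    · rw [indicator_of_notMem (show x ∉ {x | p ≤ infDist x C} from hx)]
      exact max_le le_rfl ((min_le_right _ _).trans
        (div_nonpos_of_nonpos_of_nonneg (by linarith) (by linarith)))

lemma exists_tendsto_measure_scale [BorelSpace S] (hC : IsClosed C) (hsm : ScaleAxioms C sm)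
    (hν : MemMO C ν) (hμ : MemMO C μ) (hμ0 : μ ≠ 0) {c : ℝ → ℝ} (hc : ∀ t, 0 < c t)
    (h : ScaledTendsto C sm ν μ atTop c id) :
    ∃ r > 0, ∃ K > 0, Tendsto
      (fun t => c t * (Measure.map (sm t⁻¹) ν).real {x | r ≤ infDist x C}) atTop (𝓝 K) := by
  set G : ℝ → ℝ := fun u => μ.real {x | Real.exp u ≤ infDist x C} with hG
  have hanti : Antitone G := fun u v huv =>
    measureReal_mono (fun x hx => le_trans (Real.exp_le_exp.2 huv) hx)
      (hμ.2 _ (Real.exp_pos u)).ne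
  obtain ⟨R, hR, hIR⟩ := exists_integral_radial_pos hC hsm hμ hμ0
  have hGR : 0 < G (Real.log R) := by
    rw [hG]
    refine measureReal_nonneg.lt_of_ne' fun h0 => hIR.ne' (integral_eq_zero_of_ae ?_)
    rw [measureReal_eq_zero_iff (hμ.2 _ (Real.exp_pos _)).ne, Real.exp_log hR] at h0
    filter_upwards [measure_eq_zero_iff_ae_notMem.1 h0] with x hx
    refine le_antisymm (not_lt.1 fun hlt => hx ?_) (radial_nonneg C R x)
    exact (radial_pos_iff.1 hlt).le
  obtain ⟨u, hu, huR⟩ := (hanti.countable_not_continuousAt.dense_compl ℝ).exists_lt (Real.log R)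
  have hucont : ContinuousAt G u := by simpa using hu
  have htest : ∀ f, IsCO C f → ∀ t, 1 ≤ t →
      ∫ x, f x ∂(Measure.map (sm t⁻¹) ν) = scaledIntegral sm ν f t := fun f hf t ht => by
    simpa using integral_smul_map (ν := ν) hC hsm hf (t := t) (by linarith) 1
  refine ⟨Real.exp u, Real.exp_pos u, G u, hGR.trans_le (hanti huR.le),
    tendsto_order.2 ⟨fun y hy => ?_, fun y hy => ?_⟩⟩
  · obtain ⟨v, hyv, huv⟩ := ((eventually_nhdsWithin_of_eventually_nhds
      (hucont.eventually_const_lt hy)).and (eventually_mem_nhdsWithin (s := Ioi u))).exists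
    obtain ⟨f, hf, hbd⟩ := exists_isCO_between hC (Real.exp_pos u) (Real.exp_lt_exp.2 huv)
    filter_upwards [(h f hf).eventually_const_lt (hyv.trans_le (hbd μ hμ).1),
      eventually_ge_atTop 1] with t hlt ht
    refine hlt.trans_le (mul_le_mul_of_nonneg_left ?_ (hc t).le)
    rw [id, ← htest f hf t ht]
    exact (hbd _ (hν.map_scale hC hsm ht)).2
  · obtain ⟨v, hyv, hvu⟩ := ((eventually_nhdsWithin_of_eventually_nhds
      (hucont.eventually_lt_const hy)).and (eventually_mem_nhdsWithin (s := Iio u))).exists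
    obtain ⟨f, hf, hbd⟩ := exists_isCO_between hC (Real.exp_pos v) (Real.exp_lt_exp.2 hvu)
    filter_upwards [(h f hf).eventually_lt_const ((hbd μ hμ).2.trans_lt hyv),
      eventually_ge_atTop 1] with t hlt ht
    refine lt_of_le_of_lt (mul_le_mul_of_nonneg_left ?_ (hc t).le) hlt
    rw [id, ← htest f hf t ht]
    exact (hbd _ (hν.map_scale hC hsm ht)).1

lemma tendsto_integral_iff_scaledTendsto [BorelSpace S] {ι : Type*} {L : Filter ι} {a s : ι → ℝ}
    {k : ι → ℝ≥0∞} (hC : IsClosed C) (hsm : ScaleAxioms C sm) (hs : ∀ᶠ i in L, 0 < s i)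
    (hk : ∀ᶠ i in L, (k i).toReal = a i) :
    (∀ f : S → ℝ, IsCO C f → Tendsto
      (fun i => ∫ x, f x ∂(k i • Measure.map (sm (s i)⁻¹) ν)) L (𝓝 (∫ x, f x ∂μ))) ↔
    ScaledTendsto C sm ν μ L a s := by
  refine forall₂_congr fun f hf => tendsto_congr' ?_
  filter_upwards [hs, hk] with i hi hki
  rw [integral_smul_map hC hsm hf hi, hki]

end Portmanteau

/-- The five equivalent formulations of regular variation of a measure `ν ∈ M_O`.
`ν(s·)` is realized as the pushforward of `ν` under multiplication by `s⁻¹`. -/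
theorem stmt10 [BorelSpace S] [CompleteSpace S] [TopologicalSpace.SeparableSpace S]
    (C : Set S) (hC : IsClosed C) (sm : ℝ → S → S) (hsm : ScaleAxioms C sm)
    (ν : Measure S) (hν : MemMO C ν) :
    List.TFAE [
      -- (i)
      (∃ μ : Measure S, μ ≠ 0 ∧ MemMO C μ ∧ ∃ c : ℕ → ℝ, Monotone c ∧ RegVarSeq c ∧
        ∀ f : S → ℝ, IsCO C f →
          Tendsto (fun n : ℕ =>
              ∫ x, f x ∂ (ENNReal.ofReal (c n) • Measure.map (sm ((n : ℝ))⁻¹) ν))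
            atTop (𝓝 (∫ x, f x ∂ μ))),
      -- (ii)
      (∃ μ : Measure S, μ ≠ 0 ∧ MemMO C μ ∧ ∃ c : ℝ → ℝ, RegVarFun c ∧
        ∀ f : S → ℝ, IsCO C f →
          Tendsto (fun t : ℝ =>
              ∫ x, f x ∂ (ENNReal.ofReal (c t) • Measure.map (sm t⁻¹) ν))
            atTop (𝓝 (∫ x, f x ∂ μ))),
      -- (iii)
      (∃ μ : Measure S, μ ≠ 0 ∧ MemMO C μ ∧ ∃ E : Set S, MeasurableSet E ∧ E ⊆ Cᶜ ∧
        BddAway C E ∧ (∀ᶠ t : ℝ in atTop, 0 < ν (sm t '' E) ∧ ν (sm t '' E) < ⊤) ∧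
        ∀ f : S → ℝ, IsCO C f →
          Tendsto (fun t : ℝ =>
              ∫ x, f x ∂ ((ν (sm t '' E))⁻¹ • Measure.map (sm t⁻¹) ν))
            atTop (𝓝 (∫ x, f x ∂ μ))),
      -- (iv)
      (∃ μ : Measure S, μ ≠ 0 ∧ MemMO C μ ∧ ∃ b : ℕ → ℝ, (∀ n, 0 < b n) ∧ Monotone b ∧
        ∀ f : S → ℝ, IsCO C f →
          Tendsto (fun n : ℕ =>
              ∫ x, f x ∂ ((n : ℝ≥0∞) • Measure.map (sm (b n)⁻¹) ν))
            atTop (𝓝 (∫ x, f x ∂ μ))),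
      -- (v)
      (∃ μ : Measure S, μ ≠ 0 ∧ MemMO C μ ∧ ∃ b : ℝ → ℝ, (∀ t : ℝ, 0 < t → 0 < b t) ∧
        MonotoneOn b (Set.Ioi (0:ℝ)) ∧
        ∀ f : S → ℝ, IsCO C f →
          Tendsto (fun t : ℝ =>
              ∫ x, f x ∂ (ENNReal.ofReal t • Measure.map (sm (b t)⁻¹) ν))
            atTop (𝓝 (∫ x, f x ∂ μ)))
    ] := by
  have of_fun : ∀ {μ : Measure S} {c : ℝ → ℝ}, μ ≠ 0 → MemMO C μ →
      ScaledTendsto C sm ν μ atTop c id →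
      ∃ μ' : Measure S, μ' ≠ 0 ∧ MemMO C μ' ∧ ∃ c : ℝ → ℝ, (∀ t, 0 < c t) ∧ Monotone c ∧
        Continuous c ∧ Tendsto c atTop atTop ∧
        (∃ ρ : ℝ, ∀ l : ℝ, 0 < l → Tendsto (fun t => c (l * t) / c t) atTop (𝓝 (l ^ ρ))) ∧
        ScaledTendsto C sm ν μ' atTop c id :=
    fun hμ0 hμ h => h.exists_normalization hC hsm hν hμ hμ0
  have hnat : ∀ᶠ n : ℕ in atTop, (0 : ℝ) < n := by
    filter_upwards [eventually_gt_atTop 0] with n hn using Nat.cast_pos.2 hn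
  have hreal : ∀ᶠ t : ℝ in atTop, 0 < t := eventually_gt_atTop 0
  tfae_have 1 → 2 := by
    rintro ⟨μ, hμ0, hμ, c, -, ⟨hcpos, -⟩, h⟩
    rw [tendsto_integral_iff_scaledTendsto (s := fun n : ℕ => (n : ℝ)) hC hsm hnat
      (Eventually.of_forall fun n => ENNReal.toReal_ofReal (hcpos n).le)] at h
    have hratio : Tendsto (fun n : ℕ => ((n + 1 : ℕ) : ℝ) / n) atTop (𝓝 1) := by
      have h1 := (tendsto_inv_atTop_nhds_zero_nat (𝕜 := ℝ)).const_add 1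
      rw [add_zero] at h1
      refine h1.congr' ?_
      filter_upwards [hnat] with n hn
      push_cast
      field_simp
    obtain ⟨a, ha⟩ := h.exists_of_seq hC hsm hν hμ (fun n => (hcpos n).le) Nat.mono_cast
      tendsto_natCast_atTop_atTop hratio
    obtain ⟨μ', hμ'0, hμ', c', hpos, hmono, -, -, hrv, h'⟩ := of_fun hμ0 hμ ha
    refine ⟨μ', hμ'0, hμ', c', ⟨fun t _ => hpos t, hmono.measurable, hrv⟩, ?_⟩
    exact (tendsto_integral_iff_scaledTendsto hC hsm hreal
      (Eventually.of_forall fun t => ENNReal.toReal_ofReal (hpos t).le)).2 h'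
  tfae_have 2 → 3 := by
    rintro ⟨μ, hμ0, hμ, c, ⟨hcpos, -⟩, h⟩
    rw [tendsto_integral_iff_scaledTendsto (s := fun t => t) hC hsm hreal
      (hreal.mono fun t ht => ENNReal.toReal_ofReal (hcpos t ht).le)] at h
    obtain ⟨μ', hμ'0, hμ', c', hpos, -, -, -, -, h'⟩ := of_fun hμ0 hμ h
    obtain ⟨r, hr, K, hK, hE⟩ := exists_tendsto_measure_scale hC hsm hν hμ' hμ'0 hpos h'
    have hmE : MeasurableSet {x | r ≤ infDist x C} :=
      measurableSet_le measurable_const measurable_infDist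
    refine ⟨ENNReal.ofReal K⁻¹ • μ', ofReal_smul_ne_zero hμ'0 (inv_pos.2 hK), hμ'.ofReal_smul _,
      {x | r ≤ infDist x C}, hmE, fun x hx hxC => ?_, ⟨r, hr, fun x hx => hx⟩, ?_, ?_⟩
    · have hx' : r ≤ infDist x C := hx
      rw [infDist_zero_of_mem hxC] at hx'
      linarith
    · filter_upwards [hE.eventually_const_lt hK, eventually_ge_atTop 1] with t hlt ht
      rw [measure_image_scale hsm (by linarith) hmE]
      refine ⟨pos_iff_ne_zero.2 fun h0 => ?_, (hν.map_scale hC hsm ht).2 r hr⟩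
      rw [measureReal_def, h0, ENNReal.toReal_zero, mul_zero] at hlt
      exact hlt.false
    · refine (tendsto_integral_iff_scaledTendsto hC hsm hreal
        (Eventually.of_forall fun t => rfl)).2 fun f hf => ?_
      rw [integral_smul_measure, ENNReal.toReal_ofReal (inv_pos.2 hK).le, smul_eq_mul,
        ← div_eq_inv_mul]
      refine ((h' f hf).div hE hK.ne').congr' ?_
      filter_upwards [hreal] with t ht
      rw [measure_image_scale hsm ht hmE, ENNReal.toReal_inv, Pi.div_apply,
        mul_div_mul_left _ _ (hpos t).ne', div_eq_inv_mul, measureReal_def, id]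
  tfae_have 3 → 5 := by
    rintro ⟨μ, hμ0, hμ, E, -, -, -, -, h⟩
    rw [tendsto_integral_iff_scaledTendsto (s := fun t => t) hC hsm hreal
      (Eventually.of_forall fun t => rfl)] at h
    obtain ⟨μ', hμ'0, hμ', c, hpos, hmono, hcont, htop, -, h'⟩ := of_fun hμ0 hμ h
    obtain ⟨b, hbpos, hbmono, hbtop, hcb⟩ := exists_monotone_rightInverse hmono hcont htop
    refine ⟨μ', hμ'0, hμ', b, fun t _ => hbpos t, hbmono.monotoneOn _, ?_⟩
    refine (tendsto_integral_iff_scaledTendsto hC hsm (Eventually.of_forall hbpos)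
      (hreal.mono fun t ht => ENNReal.toReal_ofReal ht.le)).2 fun f hf => ?_
    refine ((h' f hf).comp hbtop).congr' ?_
    filter_upwards [eventually_ge_atTop (c 1)] with t ht
    rw [Function.comp, hcb t ht, id]
  tfae_have 5 → 4 := by
    rintro ⟨μ, hμ0, hμ, b, hbpos, hbmono, h⟩
    have hmax : ∀ n : ℕ, (0 : ℝ) < (max n 1 : ℕ) := fun n => Nat.cast_pos.2 (by omega)
    refine ⟨μ, hμ0, hμ, fun n => b (max n 1 : ℕ), fun n => hbpos _ (hmax n), fun m n hmn =>
      hbmono (hmax m) (hmax n) (Nat.cast_le.2 (by omega)), fun f hf => ?_⟩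
    refine ((h f hf).comp tendsto_natCast_atTop_atTop).congr' ?_
    filter_upwards [eventually_ge_atTop 1] with n hn
    rw [Function.comp, max_eq_left hn, ENNReal.ofReal_natCast]
  tfae_have 4 → 1 := by
    rintro ⟨μ, hμ0, hμ, b, hbpos, hbmono, h⟩
    rw [tendsto_integral_iff_scaledTendsto hC hsm (Eventually.of_forall hbpos)
      (Eventually.of_forall fun n => ENNReal.toReal_natCast n)] at h
    have hbtop := tendsto_atTop_of_scaledTendsto hC hsm hν hμ hμ0 h hbpos hbmono
    obtain ⟨a, ha⟩ := h.exists_of_seq hC hsm hν hμ (fun n => Nat.cast_nonneg n) hbmono hbtop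
      (tendsto_ratio_of_scaledTendsto hC hsm hν hμ hμ0 h hbmono hbtop)
    obtain ⟨μ', hμ'0, hμ', c, hpos, hmono, -, -, ⟨ρ, hρ⟩, h'⟩ := of_fun hμ0 hμ ha
    refine ⟨μ', hμ'0, hμ', fun n => c n, hmono.comp Nat.mono_cast, ⟨fun n => hpos _, ρ, fun l hl =>
      tendsto_natFloor_div_rpow hmono hpos hl hρ⟩, ?_⟩
    exact (tendsto_integral_iff_scaledTendsto hC hsm hnat
      (Eventually.of_forall fun n => ENNReal.toReal_ofReal (hpos _).le)).2
      fun f hf => (h' f hf).comp tendsto_natCast_atTop_atTop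
  tfae_finish
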